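/- In ℝ⁵ with the standard Euclidean inner product, let S be the set of three vectors (-2/3,-2/3,4/3,1/2,-1/2), (1/3,-2/3,1/3,-1/2,1/2), (-2/3,4/3,-2/3,-1/2,1/2). Then the minimum of ‖x‖² over x in the convex hull of S equals 1/4, and it is attained at the point β₇ = (-1/4,0,1/4,-1/4,1/4). -/

import Mathlib

/-- A vector in `ℝ⁵` with the standard Euclidean inner product. -/
noncomputable def vec5 (a b c d e : ℝ) : EuclideanSpace ℝ (Fin 5) :=
  (WithLp.equiv 2 (Fin 5 → ℝ)).symm ![a, b, c, d, e]

/-!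
All three weights lie in the hyperplane `⟪β, ·⟫ = ‖β‖²`, hence so does their convex hull, and by
Cauchy–Schwarz no point of this hyperplane is shorter than `β`.
-/

section ConvexHull

open scoped RealInnerProductSpace

variable {E : Type*} [SeminormedAddCommGroup E] [InnerProductSpace ℝ E]
  {s : Set E} {v x : E}

theorem le_inner_of_mem_convexHull {r : ℝ} (h : ∀ y ∈ s, r ≤ ⟪v, y⟫) (hx : x ∈ convexHull ℝ s) :
    r ≤ ⟪v, x⟫ :=
  convexHull_min h (convex_halfSpace_ge (innerₗ E v).isLinear r) hx

theorem norm_le_norm_of_norm_sq_le_inner (h : ‖v‖ ^ 2 ≤ ⟪v, x⟫) : ‖v‖ ≤ ‖x‖ := by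
  have hmul : ‖v‖ * ‖v‖ ≤ ‖v‖ * ‖x‖ :=
    calc ‖v‖ * ‖v‖ = ‖v‖ ^ 2 := (sq _).symm
      _ ≤ ⟪v, x⟫ := h
      _ ≤ ‖v‖ * ‖x‖ := real_inner_le_norm v x
  rcases (norm_nonneg v).eq_or_lt with hv | hv
  · exact hv ▸ norm_nonneg x
  · exact le_of_mul_le_mul_left hmul hv

theorem norm_le_norm_of_mem_convexHull (h : ∀ y ∈ s, ‖v‖ ^ 2 ≤ ⟪v, y⟫)
    (hx : x ∈ convexHull ℝ s) : ‖v‖ ≤ ‖x‖ :=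
  norm_le_norm_of_norm_sq_le_inner (le_inner_of_mem_convexHull h hx)

end ConvexHull

theorem smul_add_smul_add_smul_mem_convexHull {𝕜 E : Type*} [Field 𝕜] [LinearOrder 𝕜]
    [IsStrictOrderedRing 𝕜] [AddCommGroup E] [Module 𝕜 E] (x y z : E) {a b c : 𝕜}
    (ha : 0 ≤ a) (hb : 0 ≤ b) (hc : 0 ≤ c) (habc : a + b + c = 1) :
    a • x + b • y + c • z ∈ convexHull 𝕜 {x, y, z} := by
  refine mem_convexHull_of_exists_fintype ![a, b, c] ![x, y, z] ?_ ?_ ?_ ?_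
  · simp [Fin.forall_fin_succ, ha, hb, hc]
  · simpa [Fin.sum_univ_three] using habc
  · simp [Fin.forall_fin_succ]
  · simp [Fin.sum_univ_three]

section Vec5

variable (a b c d e a' b' c' d' e' : ℝ)

theorem vec5_add_vec5 : vec5 a b c d e + vec5 a' b' c' d' e' =
    vec5 (a + a') (b + b') (c + c') (d + d') (e + e') := by
  ext i
  fin_cases i <;> rfl

theorem smul_vec5 (t : ℝ) :
    t • vec5 a b c d e = vec5 (t * a) (t * b) (t * c) (t * d) (t * e) := by
  ext i
  fin_cases i <;> rfl

theorem inner_vec5 : inner ℝ (vec5 a b c d e) (vec5 a' b' c' d' e') =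
    a * a' + b * b' + c * c' + d * d' + e * e' := by
  simp [vec5, PiLp.inner_apply, Fin.sum_univ_five, mul_comm]

theorem norm_sq_vec5 :
    ‖vec5 a b c d e‖ ^ 2 = a ^ 2 + b ^ 2 + c ^ 2 + d ^ 2 + e ^ 2 := by
  rw [← real_inner_self_eq_norm_sq, inner_vec5]
  ring

end Vec5

/-- Table (2.3) for `(GL(3)×GL(2), Sym²k³⊗k²)`: the minimum of `‖x‖²` over the
convex hull of the listed weight vectors equals `1/4`, attained at
`β₇ = ((-1/4) 0 (1/4) (-1/4) (1/4))`. -/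
theorem minsq_of_convexHull_weights :
    let S : Set (EuclideanSpace ℝ (Fin 5)) :=
      {vec5 (-2/3) (-2/3) (4/3) (1/2) (-1/2),
       vec5 (1/3) (-2/3) (1/3) (-1/2) (1/2),
       vec5 (-2/3) (4/3) (-2/3) (-1/2) (1/2)}
    let β : EuclideanSpace ℝ (Fin 5) := vec5 (-1/4) 0 (1/4) (-1/4) (1/4)
    β ∈ convexHull ℝ S ∧ ‖β‖ ^ 2 = 1/4 ∧
      ∀ x ∈ convexHull ℝ S, (1/4 : ℝ) ≤ ‖x‖ ^ 2 := by
  intro S β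
  have norm_sq_β : ‖β‖ ^ 2 = 1 / 4 := by
    rw [norm_sq_vec5]
    norm_num
  have inner_β : ∀ y ∈ S, inner ℝ β y = 1 / 4 := by
    rintro y (rfl | rfl | rfl) <;> rw [inner_vec5] <;> norm_num
  refine ⟨?_, norm_sq_β, fun x hx => ?_⟩
  · -- The barycentric coordinates of `β` solve `G w = ‖β‖² (1, 1, 1)`, `G` being the Gram matrix
    -- of the three weights.
    have hβ : β = (1 / 4 : ℝ) • vec5 (-2/3) (-2/3) (4/3) (1/2) (-1/2) +
        (5 / 12 : ℝ) • vec5 (1/3) (-2/3) (1/3) (-1/2) (1/2) +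
        (1 / 3 : ℝ) • vec5 (-2/3) (4/3) (-2/3) (-1/2) (1/2) := by
      simp only [β, smul_vec5, vec5_add_vec5]
      norm_num
    rw [hβ]
    apply smul_add_smul_add_smul_mem_convexHull <;> norm_num
  · have hle : ‖β‖ ≤ ‖x‖ :=
      norm_le_norm_of_mem_convexHull (fun y hy => (norm_sq_β.trans (inner_β y hy).symm).le) hx
    calc 1 / 4 = ‖β‖ ^ 2 := norm_sq_β.symm
      _ ≤ ‖x‖ ^ 2 := by gcongr
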